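/- There is an absolute constant c₀ > 0 with the following property. Let A be an n×n real positive semidefinite matrix and N an n×n real matrix such that ‖N‖_F² ≤ η ‖A‖_F² for some 0 < η ≤ 1 and ‖N_{·,j}‖₂² ≤ ‖A_{·,j}‖₂² for every column index j; assume (A+N)_{jj} > 0 for all j, and set q_j = (A+N)_{jj} / tr(A+N) and φ = max_j A_{jj}/(A+N)_{jj}. Let 0 < ε < 1, 0 < δ < 1, let k ≥ 1 be an integer, and let t be an integer with t ≥ c₀ · φ · √n · k² · log(n/δ) / ε². Sample indices j₁,…,j_t ∈ {1,…,n} independently with ℙ(j_l = j) = q_j, and let T be the n×t matrix whose l-th column is (1/√(t·q_{j_l})) · e_{j_l}, so that A T has columns A_{·,j_l}/√(t·q_{j_l}). Then with probability at least 1 − δ, the matrices (ε/k)‖A‖_F² · I − ((AT)(AT)ᵀ − AAᵀ) and (ε/k)‖A‖_F² · I + ((AT)(AT)ᵀ − AAᵀ) are both positive semidefinite; i.e., AAᵀ − (ε/k)‖A‖_F²·I ⪯ (AT)(AT)ᵀ ⪯ AAᵀ + (ε/k)‖A‖_F²·I in the Loewner order. -/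

import Mathlib

open Matrix

noncomputable def frobeniusSq {m n : ℕ} (M : Matrix (Fin m) (Fin n) ℝ) : ℝ :=
  ∑ i, ∑ j, (M i j)^2

/-- The n×t column-sampling-and-rescaling matrix: its l-th column is
(1/√(t·q(jv l))) times the standard basis vector e_{jv l}. -/
noncomputable def colSample {n : ℕ} (t : ℕ) (q : Fin n → ℝ) (jv : Fin t → Fin n) :
    Matrix (Fin n) (Fin t) ℝ :=
  Matrix.of fun i l => if i = jv l then (Real.sqrt (t * q (jv l)))⁻¹ else 0

/-- Probability, under i.i.d. sampling of t indices with distribution q, of the event E. -/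
noncomputable def iidProb {n : ℕ} (t : ℕ) (q : Fin n → ℝ) (E : Set (Fin t → Fin n)) : ℝ :=
  ∑ jv : Fin t → Fin n, Set.indicator E (fun v => ∏ l, q (v l)) jv

/-- Probability, under two independent i.i.d. samples of t indices each (with
distributions q and p respectively), of the event E. -/
noncomputable def iidProb2 {n : ℕ} (t : ℕ) (q p : Fin n → ℝ)
    (E : Set ((Fin t → Fin n) × (Fin t → Fin n))) : ℝ :=
  ∑ w : (Fin t → Fin n) × (Fin t → Fin n),
    Set.indicator E (fun w => (∏ l, q (w.1 l)) * (∏ l, p (w.2 l))) w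

/-!
The estimator `(AT)(AT)ᵀ` is an average of `t` independent copies of the rank-one matrix
`Z = aⱼ aⱼᵀ / qⱼ`, where `aⱼ` is the `j`-th column of `A`, and `𝔼 Z = AAᵀ`. Since the Frobenius norm
dominates the spectral norm, it is enough to bound the deviation in Frobenius norm, where a
dimension-free Bernstein inequality in Hilbert space (Pinelis) applies: for independent centred
vectors, `𝔼 cosh ‖X₁ + ⋯ + Xₜ‖ ≤ (𝔼 (exp ‖X‖ - ‖X‖)) ^ t`, because
`cosh ‖x + y‖ ≤ cosh ‖x‖ (exp ‖y‖ - ‖y‖)` up to a term linear in `y`.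

The two quantities entering Bernstein's inequality are `𝔼 ‖Z‖_F = ‖A‖_F²` and a uniform bound on
`‖Z‖_F = ‖aⱼ‖² / qⱼ`. For the latter, positive semidefiniteness gives `‖aⱼ‖² ≤ ‖A‖_F Aⱼⱼ`, so
`‖Z‖_F ≤ φ ‖A‖_F tr(A + N)`, and `tr(A + N) ≤ √n (‖A‖_F + ‖N‖_F) ≤ 2 √n ‖A‖_F`. The resulting
failure probability `2 δ / n` is at most `δ` for `n ≥ 2`; for `n = 1` the estimator is exact.
-/

open Real InnerProductGeometry
open scoped RealInnerProductSpace

section HyperbolicCosine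

theorem convexOn_cosh_sqrt : ConvexOn ℝ (Set.Ici 0) fun y : ℝ ↦ cosh √y := by
  refine ⟨convex_Ici 0, fun x hx y hy a b ha hb hab ↦ ?_⟩
  have hxy : 0 ≤ a • x + b • y := convex_Ici (𝕜 := ℝ) 0 hx hy ha hb hab
  refine hasSum_le (fun k ↦ ?_) (hasSum_cosh _)
    (((hasSum_cosh √x).const_smul a).add ((hasSum_cosh √y).const_smul b))
  have hpow := (convexOn_pow k).2 hx hy ha hb hab
  rw [pow_mul, pow_mul, pow_mul, sq_sqrt hxy, sq_sqrt hx, sq_sqrt hy]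
  calc (a • x + b • y) ^ k / (2 * k).factorial
      ≤ (a • x ^ k + b • y ^ k) / (2 * k).factorial := by gcongr
    _ = a • (x ^ k / (2 * k).factorial) + b • (y ^ k / (2 * k).factorial) := by
      simp only [smul_eq_mul]; ring

theorem exp_sub_self_le_one_add_sq {x : ℝ} (hx : |x| ≤ 1) : exp x - x ≤ 1 + x ^ 2 := by
  linarith [le_of_abs_le (abs_exp_sub_one_sub_id_le hx)]

theorem exp_div_two_le_cosh (x : ℝ) : exp x / 2 ≤ cosh x := by
  rw [cosh_eq]
  linarith [exp_pos (-x)]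

variable {E : Type*} [NormedAddCommGroup E] [InnerProductSpace ℝ E]

/- Up to the sign convention for the angle, the right-hand side is the hyperbolic law of cosines: a
Euclidean triangle has a shorter third side than the hyperbolic one with the same two sides and
angle. Convexity of `cosh ∘ √` reduces the claim to the degenerate triangles. -/
theorem cosh_norm_add_le_cosh_mul_cosh (x y : E) :
    cosh ‖x + y‖ ≤ cosh ‖x‖ * cosh ‖y‖ + cos (angle x y) * (sinh ‖x‖ * sinh ‖y‖) := by
  have hθ_le := cos_le_one (angle x y)
  have hθ_ge := neg_one_le_cos (angle x y)
  have law_of_cosines : ‖x + y‖ ^ 2 =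
      ((1 + cos (angle x y)) / 2) • (‖x‖ + ‖y‖) ^ 2 +
        ((1 - cos (angle x y)) / 2) • (‖x‖ - ‖y‖) ^ 2 := by
    rw [norm_add_sq_real, ← cos_angle_mul_norm_mul_norm]
    simp only [smul_eq_mul]
    ring
  calc cosh ‖x + y‖ = cosh √(‖x + y‖ ^ 2) := by rw [sqrt_sq (norm_nonneg _)]
    _ ≤ ((1 + cos (angle x y)) / 2) • cosh √((‖x‖ + ‖y‖) ^ 2) +
        ((1 - cos (angle x y)) / 2) • cosh √((‖x‖ - ‖y‖) ^ 2) := by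
      rw [law_of_cosines]
      exact convexOn_cosh_sqrt.2 (Set.mem_Ici.2 (sq_nonneg _)) (Set.mem_Ici.2 (sq_nonneg _))
        (by linarith) (by linarith) (by ring)
    _ = cosh ‖x‖ * cosh ‖y‖ + cos (angle x y) * (sinh ‖x‖ * sinh ‖y‖) := by
      simp only [sqrt_sq_eq_abs, cosh_abs, cosh_add, cosh_sub, smul_eq_mul]
      ring

theorem cosh_norm_add_le (x y : E) :
    cosh ‖x + y‖ ≤ cosh ‖x‖ * (exp ‖y‖ - ‖y‖) + sinh ‖x‖ / ‖x‖ * ⟪x, y⟫ := by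
  have inner_term : sinh ‖x‖ / ‖x‖ * ⟪x, y⟫ = sinh ‖x‖ * (cos (angle x y) * ‖y‖) := by
    rcases eq_or_ne x 0 with rfl | hx
    · simp
    · rw [← cos_angle_mul_norm_mul_norm]
      field_simp
  have excess_nonneg : 0 ≤ sinh ‖y‖ - ‖y‖ := sub_nonneg.2 (self_le_sinh_iff.2 (norm_nonneg y))
  calc cosh ‖x + y‖
      ≤ cosh ‖x‖ * cosh ‖y‖ + cos (angle x y) * (sinh ‖x‖ * sinh ‖y‖) :=
        cosh_norm_add_le_cosh_mul_cosh x y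
    _ = cosh ‖x‖ * cosh ‖y‖ + cos (angle x y) * (sinh ‖x‖ * (sinh ‖y‖ - ‖y‖)) +
        sinh ‖x‖ * (cos (angle x y) * ‖y‖) := by ring
    _ ≤ cosh ‖x‖ * cosh ‖y‖ + 1 * (cosh ‖x‖ * (sinh ‖y‖ - ‖y‖)) +
        sinh ‖x‖ * (cos (angle x y) * ‖y‖) := by
      gcongr
      · exact cos_le_one _
      · exact (sinh_lt_cosh _).le
    _ = cosh ‖x‖ * (exp ‖y‖ - ‖y‖) + sinh ‖x‖ / ‖x‖ * ⟪x, y⟫ := by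
      rw [inner_term, ← cosh_add_sinh]
      ring

theorem sum_mul_cosh_norm_add_le {ι : Type*} [Fintype ι] {w : ι → ℝ} {X : ι → E}
    (hw : ∀ i, 0 ≤ w i) (hX : ∑ i, w i • X i = 0) (x : E) :
    ∑ i, w i * cosh ‖x + X i‖ ≤ cosh ‖x‖ * ∑ i, w i * (exp ‖X i‖ - ‖X i‖) := by
  have inner_mean : ∑ i, w i * ⟪x, X i⟫ = 0 := by
    simpa [inner_sum, inner_smul_right] using congrArg (fun y ↦ ⟪x, y⟫) hX
  calc ∑ i, w i * cosh ‖x + X i‖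
      ≤ ∑ i, w i * (cosh ‖x‖ * (exp ‖X i‖ - ‖X i‖) + sinh ‖x‖ / ‖x‖ * ⟪x, X i⟫) := by
        gcongr with i
        · exact hw i
        · exact cosh_norm_add_le x (X i)
    _ = cosh ‖x‖ * ∑ i, w i * (exp ‖X i‖ - ‖X i‖) +
        sinh ‖x‖ / ‖x‖ * ∑ i, w i * ⟪x, X i⟫ := by
      simp only [Finset.mul_sum, ← Finset.sum_add_distrib]
      congr! 1
      ring
    _ = cosh ‖x‖ * ∑ i, w i * (exp ‖X i‖ - ‖X i‖) := by rw [inner_mean, mul_zero, add_zero]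

end HyperbolicCosine

section IidExpectation

variable {ι : Type*} [Fintype ι] {t : ℕ} {q : ι → ℝ}

/-- The expectation of `f` under i.i.d. sampling of `t` indices with distribution `q`: the
counterpart of `iidProb` for random variables, over an arbitrary finite index type. -/
noncomputable def iidExpect (t : ℕ) (q : ι → ℝ) (f : (Fin t → ι) → ℝ) : ℝ :=
  ∑ v, (∏ l, q (v l)) * f v

theorem iidExpect_mono (hq : ∀ i, 0 ≤ q i) {f g : (Fin t → ι) → ℝ} (hfg : ∀ v, f v ≤ g v) :
    iidExpect t q f ≤ iidExpect t q g :=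
  Finset.sum_le_sum fun v _ ↦
    mul_le_mul_of_nonneg_left (hfg v) (Finset.prod_nonneg fun l _ ↦ hq (v l))

theorem iidExpect_add (f g : (Fin t → ι) → ℝ) :
    iidExpect t q (fun v ↦ f v + g v) = iidExpect t q f + iidExpect t q g := by
  simp only [iidExpect, mul_add, Finset.sum_add_distrib]

theorem iidExpect_mul_const (f : (Fin t → ι) → ℝ) (c : ℝ) :
    iidExpect t q (fun v ↦ f v * c) = iidExpect t q f * c := by
  simp only [iidExpect, Finset.sum_mul, mul_assoc]

theorem iidExpect_one (hq : ∑ i, q i = 1) : iidExpect t q (fun _ ↦ 1) = 1 := by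
  simp only [iidExpect, mul_one, ← Fintype.sum_pow, hq, one_pow]

theorem iidExpect_succ (f : (Fin (t + 1) → ι) → ℝ) :
    iidExpect (t + 1) q f = iidExpect t q fun v ↦ ∑ i, q i * f (Fin.cons i v) := by
  simp only [iidExpect, ← (Fin.consEquiv fun _ : Fin (t + 1) ↦ ι).sum_comp,
    Fintype.sum_prod_type_right, Fin.consEquiv_apply, Fin.prod_univ_succ, Fin.cons_zero,
    Fin.cons_succ, Finset.mul_sum]
  exact Finset.sum_congr rfl fun v _ ↦ Finset.sum_congr rfl fun i _ ↦ by
    rw [mul_comm (q i), mul_assoc]; rfl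

theorem iidExpect_cosh_norm_sum_le {E : Type*} [NormedAddCommGroup E] [InnerProductSpace ℝ E]
    {X : ι → E} (hq : ∀ i, 0 ≤ q i) (hX : ∑ i, q i • X i = 0) (t : ℕ) :
    iidExpect t q (fun v ↦ cosh ‖∑ l, X (v l)‖) ≤ (∑ i, q i * (exp ‖X i‖ - ‖X i‖)) ^ t := by
  have factor_nonneg : 0 ≤ ∑ i, q i * (exp ‖X i‖ - ‖X i‖) :=
    Finset.sum_nonneg fun i _ ↦ mul_nonneg (hq i) (by linarith [add_one_le_exp ‖X i‖])
  induction t with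
  | zero => simp [iidExpect]
  | succ t ih =>
    calc iidExpect (t + 1) q (fun v ↦ cosh ‖∑ l, X (v l)‖)
        = iidExpect t q fun v ↦ ∑ i, q i * cosh ‖(∑ l, X (v l)) + X i‖ := by
          simp only [iidExpect_succ, Fin.sum_univ_succ, Fin.cons_zero, Fin.cons_succ, add_comm]
      _ ≤ iidExpect t q fun v ↦ cosh ‖∑ l, X (v l)‖ * ∑ i, q i * (exp ‖X i‖ - ‖X i‖) :=
          iidExpect_mono hq fun v ↦ sum_mul_cosh_norm_add_le hq hX _
      _ = iidExpect t q (fun v ↦ cosh ‖∑ l, X (v l)‖) * ∑ i, q i * (exp ‖X i‖ - ‖X i‖) :=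
          iidExpect_mul_const _ _
      _ ≤ (∑ i, q i * (exp ‖X i‖ - ‖X i‖)) ^ (t + 1) := by
          rw [pow_succ]
          gcongr

theorem iidExpect_cosh_norm_sum_le_exp {E : Type*} [NormedAddCommGroup E] [InnerProductSpace ℝ E]
    {X : ι → E} {V : ℝ} (hq : ∀ i, 0 ≤ q i) (hq_sum : ∑ i, q i = 1) (hX : ∑ i, q i • X i = 0)
    (hX_le : ∀ i, ‖X i‖ ≤ 1) (hV : ∑ i, q i * ‖X i‖ ^ 2 ≤ V) (t : ℕ) :
    iidExpect t q (fun v ↦ cosh ‖∑ l, X (v l)‖) ≤ exp (t * V) := by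
  have one_step : ∑ i, q i * (exp ‖X i‖ - ‖X i‖) ≤ exp V :=
    calc ∑ i, q i * (exp ‖X i‖ - ‖X i‖)
        ≤ ∑ i, q i * (1 + ‖X i‖ ^ 2) := by
          gcongr with i
          · exact hq i
          · exact exp_sub_self_le_one_add_sq ((abs_norm (X i)).trans_le (hX_le i))
      _ = 1 + ∑ i, q i * ‖X i‖ ^ 2 := by
          simp only [mul_add, mul_one, Finset.sum_add_distrib, hq_sum]
      _ ≤ exp V := by linarith [add_one_le_exp V]
  refine (iidExpect_cosh_norm_sum_le hq hX t).trans ?_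
  rw [exp_nat_mul]
  refine pow_le_pow_left₀ (Finset.sum_nonneg fun i _ ↦ mul_nonneg (hq i) ?_) one_step t
  linarith [add_one_le_exp ‖X i‖]

end IidExpectation

section BernsteinInequality

variable {n t : ℕ} {q : Fin n → ℝ}

theorem iidProb_eq_iidExpect_indicator (S : Set (Fin t → Fin n)) :
    iidProb t q S = iidExpect t q (S.indicator 1) := by
  classical
  simp only [iidProb, iidExpect, Set.indicator_apply, Pi.one_apply, mul_ite, mul_one, mul_zero]

theorem iidProb_mono (hq : ∀ j, 0 ≤ q j) {S T : Set (Fin t → Fin n)} (hST : S ⊆ T) :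
    iidProb t q S ≤ iidProb t q T := by
  simp only [iidProb_eq_iidExpect_indicator]
  exact iidExpect_mono hq
    (Set.indicator_le_indicator_of_subset hST fun _ ↦ zero_le_one)

theorem iidProb_eq_one (hq : ∑ j, q j = 1) {S : Set (Fin t → Fin n)} (hS : ∀ v, v ∈ S) :
    iidProb t q S = 1 := by
  rw [iidProb_eq_iidExpect_indicator, Set.eq_univ_of_forall hS, Set.indicator_univ]
  exact iidExpect_one hq

theorem one_sub_iidExpect_div_le_iidProb (hq : ∀ j, 0 ≤ q j) (hq_sum : ∑ j, q j = 1)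
    {f : (Fin t → Fin n) → ℝ} {c : ℝ} (hc : 0 < c) (hf : ∀ v, 0 ≤ f v)
    {S : Set (Fin t → Fin n)} (hfS : ∀ v ∉ S, c ≤ f v) :
    1 - iidExpect t q f / c ≤ iidProb t q S := by
  have pointwise (v : Fin t → Fin n) : 1 ≤ S.indicator 1 v + f v * c⁻¹ := by
    by_cases hv : v ∈ S
    · rw [Set.indicator_of_mem hv, Pi.one_apply, le_add_iff_nonneg_right]
      exact mul_nonneg (hf v) (inv_nonneg.2 hc.le)
    · rw [Set.indicator_of_notMem hv, zero_add, ← div_eq_mul_inv, one_le_div hc]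
      exact hfS v hv
  rw [sub_le_iff_le_add, iidProb_eq_iidExpect_indicator, div_eq_mul_inv, ← iidExpect_mul_const,
    ← iidExpect_add, ← iidExpect_one (t := t) hq_sum]
  exact iidExpect_mono hq pointwise

variable {E : Type*} [NormedAddCommGroup E] [InnerProductSpace ℝ E]

theorem chernoff_norm_sum {X : Fin n → E} {V r : ℝ} (hq : ∀ j, 0 ≤ q j) (hq_sum : ∑ j, q j = 1)
    (hX : ∑ j, q j • X j = 0) (hX_le : ∀ j, ‖X j‖ ≤ 1) (hV : ∑ j, q j * ‖X j‖ ^ 2 ≤ V)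
    (hr : 0 ≤ r) (t : ℕ) :
    1 - 2 * exp (t * V - r) ≤ iidProb t q {v | ‖∑ l, X (v l)‖ ≤ r} := by
  have cosh_ge (v : Fin t → Fin n) (hv : v ∉ {v | ‖∑ l, X (v l)‖ ≤ r}) :
      exp r / 2 ≤ cosh ‖∑ l, X (v l)‖ := by
    refine (exp_div_two_le_cosh r).trans (cosh_le_cosh.2 ?_)
    rw [abs_of_nonneg hr, abs_norm]
    exact (not_le.1 hv).le
  calc 1 - 2 * exp (t * V - r) = 1 - exp (t * V) / (exp r / 2) := by
        rw [exp_sub, div_div_eq_mul_div, mul_comm 2, div_mul_eq_mul_div]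
    _ ≤ 1 - iidExpect t q (fun v ↦ cosh ‖∑ l, X (v l)‖) / (exp r / 2) := by
        gcongr
        exact iidExpect_cosh_norm_sum_le_exp hq hq_sum hX hX_le hV t
    _ ≤ iidProb t q {v | ‖∑ l, X (v l)‖ ≤ r} :=
        one_sub_iidExpect_div_le_iidProb hq hq_sum (by positivity) (fun v ↦ (cosh_pos _).le) cosh_ge

theorem bernstein_norm_sum {X : Fin n → E} {B V s : ℝ} (hq : ∀ j, 0 ≤ q j)
    (hq_sum : ∑ j, q j = 1) (hX : ∑ j, q j • X j = 0) (hB : ∀ j, ‖X j‖ ≤ B) (hV_pos : 0 < V)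
    (hV : ∑ j, q j * ‖X j‖ ^ 2 ≤ V) (hs : 0 < s) (hsB : s * B ≤ 2 * V) (t : ℕ) :
    1 - 2 * exp (-(t * s ^ 2 / (4 * V))) ≤ iidProb t q {v | ‖∑ l, X (v l)‖ ≤ t * s} := by
  -- `a` minimises the Chernoff exponent `t * (a ^ 2 * V) - a * (t * s)`.
  set a := s / (2 * V) with ha_def
  have ha : 0 < a := by positivity
  have scaled_mean : ∑ j, q j • a • X j = 0 := by
    simp only [smul_comm _ a, ← Finset.smul_sum, hX, smul_zero]
  have scaled_norm_le (j : Fin n) : ‖a • X j‖ ≤ 1 :=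
    calc ‖a • X j‖ = s * ‖X j‖ / (2 * V) := by
          rw [norm_smul, norm_of_nonneg ha.le, div_mul_eq_mul_div]
      _ ≤ s * B / (2 * V) := by gcongr; exact hB j
      _ ≤ 1 := (div_le_one (by positivity)).2 hsB
  have scaled_variance : ∑ j, q j * ‖a • X j‖ ^ 2 ≤ a ^ 2 * V := by
    simp only [norm_smul, mul_pow, norm_eq_abs, sq_abs, mul_left_comm _ (a ^ 2), ← Finset.mul_sum]
    gcongr
  have exponent : t * (a ^ 2 * V) - a * (t * s) = -(t * s ^ 2 / (4 * V)) := by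
    rw [ha_def]
    field_simp
    ring
  have event (v : Fin t → Fin n) : ‖∑ l, a • X (v l)‖ ≤ a * (t * s) ↔ ‖∑ l, X (v l)‖ ≤ t * s := by
    rw [← Finset.smul_sum, norm_smul, norm_of_nonneg ha.le, mul_le_mul_iff_right₀ ha]
  simpa only [exponent, event] using
    chernoff_norm_sum hq hq_sum scaled_mean scaled_norm_le scaled_variance
      (r := a * (t * s)) (by positivity) t

theorem norm_sum_smul_le_of_norm_le {ι : Type*} [Fintype ι] {w : ι → ℝ} {Y : ι → E} {R : ℝ}
    (hw : ∀ i, 0 ≤ w i) (hw_sum : ∑ i, w i = 1) (hR : ∀ i, ‖Y i‖ ≤ R) :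
    ‖∑ i, w i • Y i‖ ≤ R :=
  mem_closedBall_zero_iff.1 <| (convex_closedBall (0 : E) R).sum_mem (fun i _ ↦ hw i) hw_sum
    fun i _ ↦ mem_closedBall_zero_iff.2 (hR i)

theorem sum_mul_norm_sub_mean_sq_le {ι : Type*} [Fintype ι] {w : ι → ℝ} {Y : ι → E} {m : E}
    (hw_sum : ∑ i, w i = 1) (hm : ∑ i, w i • Y i = m) :
    ∑ i, w i * ‖Y i - m‖ ^ 2 ≤ ∑ i, w i * ‖Y i‖ ^ 2 := by
  have inner_mean : ∑ i, w i * ⟪Y i, m⟫ = ‖m‖ ^ 2 := by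
    rw [← real_inner_self_eq_norm_sq m]
    nth_rewrite 2 [← hm]
    simp [sum_inner, inner_smul_left]
  have expand : ∑ i, w i * ‖Y i - m‖ ^ 2 =
      ∑ i, w i * ‖Y i‖ ^ 2 - 2 * ∑ i, w i * ⟪Y i, m⟫ + (∑ i, w i) * ‖m‖ ^ 2 := by
    simp only [norm_sub_sq_real, Finset.mul_sum, Finset.sum_mul, ← Finset.sum_sub_distrib,
      ← Finset.sum_add_distrib]
    congr! 1
    ring
  rw [expand, inner_mean, hw_sum]
  linarith [sq_nonneg ‖m‖]

theorem bernstein_norm_sum_sub_mean {Y : Fin n → E} {m : E} {R F s : ℝ} (hq : ∀ j, 0 ≤ q j)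
    (hq_sum : ∑ j, q j = 1) (hm : ∑ j, q j • Y j = m) (hR_pos : 0 < R) (hR : ∀ j, ‖Y j‖ ≤ R)
    (hF_pos : 0 < F) (hF : ∑ j, q j * ‖Y j‖ ≤ F) (hs : 0 < s) (hsF : s ≤ F) (t : ℕ) :
    1 - 2 * exp (-(t * s ^ 2 / (4 * (R * F)))) ≤
      iidProb t q {v | ‖∑ l, (Y (v l) - m)‖ ≤ t * s} := by
  have hm_le : ‖m‖ ≤ R := hm ▸ norm_sum_smul_le_of_norm_le hq hq_sum hR
  have centered_mean : ∑ j, q j • (Y j - m) = 0 := by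
    simp only [smul_sub, Finset.sum_sub_distrib, ← Finset.sum_smul, hm, hq_sum, one_smul, sub_self]
  have centered_norm_le (j : Fin n) : ‖Y j - m‖ ≤ 2 * R := by
    linarith [norm_sub_le (Y j) m, hR j]
  have variance_le : ∑ j, q j * ‖Y j - m‖ ^ 2 ≤ R * F :=
    calc ∑ j, q j * ‖Y j - m‖ ^ 2 ≤ ∑ j, q j * ‖Y j‖ ^ 2 := sum_mul_norm_sub_mean_sq_le hq_sum hm
      _ ≤ ∑ j, R * (q j * ‖Y j‖) := Finset.sum_le_sum fun j _ ↦ by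
          nlinarith [mul_nonneg (hq j) (norm_nonneg (Y j)), hR j]
      _ ≤ R * F := by rw [← Finset.mul_sum]; gcongr
  exact bernstein_norm_sum hq hq_sum centered_mean centered_norm_le (by positivity) variance_le hs
    (by nlinarith) t

end BernsteinInequality

section Frobenius

variable {m n : ℕ}

theorem frobeniusSq_eq_sum_col (M : Matrix (Fin m) (Fin n) ℝ) :
    frobeniusSq M = ∑ j, ∑ i, M i j ^ 2 :=
  Finset.sum_comm

theorem frobeniusSq_nonneg (M : Matrix (Fin m) (Fin n) ℝ) : 0 ≤ frobeniusSq M := by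
  unfold frobeniusSq
  positivity

theorem norm_toLp_vec_sq (M : Matrix (Fin m) (Fin n) ℝ) :
    ‖WithLp.toLp 2 M.vec‖ ^ 2 = frobeniusSq M := by
  simp [EuclideanSpace.real_norm_sq_eq, Fintype.sum_prod_type, vec, frobeniusSq_eq_sum_col]

theorem norm_toLp_vec_vecMulVec_self (a : Fin m → ℝ) :
    ‖WithLp.toLp 2 (vecMulVec a a).vec‖ = ∑ i, a i ^ 2 := by
  refine (sq_eq_sq₀ (norm_nonneg _) (by positivity)).1 ?_
  simp only [norm_toLp_vec_sq, frobeniusSq, vecMulVec_apply, mul_pow, sq (∑ i, a i ^ 2),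
    Finset.sum_mul_sum]

theorem dotProduct_sq_le (x y : Fin n → ℝ) : (x ⬝ᵥ y) ^ 2 ≤ (x ⬝ᵥ x) * (y ⬝ᵥ y) := by
  simpa only [dotProduct, sq] using Finset.sum_mul_sq_le_sq_mul_sq Finset.univ x y

theorem dotProduct_mulVec_sq_le (M : Matrix (Fin m) (Fin n) ℝ) (x : Fin m → ℝ) (y : Fin n → ℝ) :
    (x ⬝ᵥ M *ᵥ y) ^ 2 ≤ frobeniusSq M * ((x ⬝ᵥ x) * (y ⬝ᵥ y)) := by
  have mulVec_le : (M *ᵥ y) ⬝ᵥ (M *ᵥ y) ≤ frobeniusSq M * (y ⬝ᵥ y) := by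
    rw [frobeniusSq, Finset.sum_mul]
    refine Finset.sum_le_sum fun i _ ↦ ?_
    simpa only [mulVec, dotProduct, sq] using dotProduct_sq_le (M i) y
  calc (x ⬝ᵥ M *ᵥ y) ^ 2 ≤ (x ⬝ᵥ x) * ((M *ᵥ y) ⬝ᵥ (M *ᵥ y)) := dotProduct_sq_le _ _
    _ ≤ (x ⬝ᵥ x) * (frobeniusSq M * (y ⬝ᵥ y)) :=
      mul_le_mul_of_nonneg_left mulVec_le (dotProduct_star_self_nonneg x)
    _ = frobeniusSq M * ((x ⬝ᵥ x) * (y ⬝ᵥ y)) := by ring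

theorem abs_dotProduct_mulVec_self_le {M : Matrix (Fin n) (Fin n) ℝ} {s : ℝ} (hs : 0 ≤ s)
    (hM : frobeniusSq M ≤ s ^ 2) (x : Fin n → ℝ) : |x ⬝ᵥ M *ᵥ x| ≤ s * (x ⬝ᵥ x) := by
  have hx : 0 ≤ x ⬝ᵥ x := dotProduct_star_self_nonneg x
  refine abs_le_of_sq_le_sq ?_ (by positivity)
  calc (x ⬝ᵥ M *ᵥ x) ^ 2 ≤ frobeniusSq M * ((x ⬝ᵥ x) * (x ⬝ᵥ x)) := dotProduct_mulVec_sq_le M x x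
    _ ≤ s ^ 2 * ((x ⬝ᵥ x) * (x ⬝ᵥ x)) := by gcongr
    _ = (s * (x ⬝ᵥ x)) ^ 2 := by ring

theorem posSemidef_sub_of_frobeniusSq_sub_le {M P : Matrix (Fin n) (Fin n) ℝ} {s : ℝ}
    (hM : M.IsHermitian) (hP : P.IsHermitian) (hs : 0 ≤ s) (hMP : frobeniusSq (M - P) ≤ s ^ 2) :
    (P + s • 1 - M).PosSemidef ∧ (M - (P - s • 1)).PosSemidef := by
  have smul_one : (s • (1 : Matrix (Fin n) (Fin n) ℝ)).IsHermitian :=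
    isHermitian_one.smul (IsSelfAdjoint.all s)
  have form_le (x : Fin n → ℝ) := abs_le.1 (abs_dotProduct_mulVec_self_le hs hMP x)
  constructor
  · refine .of_dotProduct_mulVec_nonneg ((hP.add smul_one).sub hM) fun x ↦ ?_
    have := (form_le x).2
    simp only [add_mulVec, sub_mulVec, smul_mulVec, one_mulVec, dotProduct_add, dotProduct_sub,
      dotProduct_smul, star_trivial, smul_eq_mul] at this ⊢
    linarith
  · refine .of_dotProduct_mulVec_nonneg (hM.sub (hP.sub smul_one)) fun x ↦ ?_
    have := (form_le x).1
    simp only [sub_mulVec, smul_mulVec, one_mulVec, dotProduct_sub, dotProduct_smul, star_trivial,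
      smul_eq_mul] at this ⊢
    linarith

theorem trace_le_sqrt_mul_sqrt_frobeniusSq (M : Matrix (Fin n) (Fin n) ℝ) :
    M.trace ≤ √n * √(frobeniusSq M) := by
  rw [← sqrt_mul (Nat.cast_nonneg n)]
  refine le_sqrt_of_sq_le ?_
  calc M.trace ^ 2 ≤ n * ∑ i, M i i ^ 2 := by
        simpa [trace] using sq_sum_le_card_mul_sum_sq (s := Finset.univ) (f := M.diag)
    _ ≤ n * frobeniusSq M := by
        unfold frobeniusSq
        gcongr with i
        exact Finset.single_le_sum (f := fun j ↦ M i j ^ 2) (fun j _ ↦ sq_nonneg _)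
          (Finset.mem_univ i)

theorem dotProduct_mulVec_sq_le_of_posSemidef {A : Matrix (Fin n) (Fin n) ℝ} (hA : A.PosSemidef)
    (x y : Fin n → ℝ) : (x ⬝ᵥ A *ᵥ y) ^ 2 ≤ (x ⬝ᵥ A *ᵥ x) * (y ⬝ᵥ A *ᵥ y) := by
  have symm : y ⬝ᵥ A *ᵥ x = x ⬝ᵥ A *ᵥ y := by
    rw [dotProduct_mulVec, ← mulVec_transpose, ← conjTranspose_eq_transpose_of_trivial,
      hA.isHermitian.eq, dotProduct_comm]
  simpa only [toBilin'_apply', symm, ← sq] using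
    LinearMap.BilinForm.apply_mul_apply_le_of_forall_zero_le (toBilin' A)
      (fun z ↦ by
        simpa only [toBilin'_apply', star_trivial] using hA.dotProduct_mulVec_nonneg z) x y

/- Cauchy–Schwarz for the form of `A`, applied to `a = A eⱼ` and `eⱼ`, gives
`‖a‖⁴ ≤ (aᵀ A a) Aⱼⱼ ≤ ‖A‖_F ‖a‖² Aⱼⱼ`. -/
theorem sum_col_sq_le_of_posSemidef {A : Matrix (Fin n) (Fin n) ℝ} (hA : A.PosSemidef)
    (j : Fin n) : ∑ i, A i j ^ 2 ≤ √(frobeniusSq A) * A j j := by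
  set a := A.col j with ha
  have col_eq : A *ᵥ Pi.single j 1 = a := by simp [ha]
  have diag_eq : Pi.single j 1 ⬝ᵥ A *ᵥ Pi.single j 1 = A j j := by simp
  have sum_eq : ∑ i, A i j ^ 2 = a ⬝ᵥ a := by simp [ha, dotProduct, sq]
  have ha_nonneg : 0 ≤ a ⬝ᵥ a := dotProduct_star_self_nonneg a
  have quartic : (a ⬝ᵥ a) * (a ⬝ᵥ a) ≤ (√(frobeniusSq A) * A j j) * (a ⬝ᵥ a) :=
    calc (a ⬝ᵥ a) * (a ⬝ᵥ a) = (a ⬝ᵥ A *ᵥ Pi.single j 1) ^ 2 := by rw [col_eq, sq]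
      _ ≤ (a ⬝ᵥ A *ᵥ a) * A j j := by
          simpa only [diag_eq] using dotProduct_mulVec_sq_le_of_posSemidef hA a (Pi.single j 1)
      _ ≤ (√(frobeniusSq A) * (a ⬝ᵥ a)) * A j j := by
          refine mul_le_mul_of_nonneg_right (le_of_abs_le ?_) hA.diag_nonneg
          exact abs_dotProduct_mulVec_self_le (sqrt_nonneg _)
            (sq_sqrt (frobeniusSq_nonneg A)).ge a
      _ = (√(frobeniusSq A) * A j j) * (a ⬝ᵥ a) := by ring
  rw [sum_eq]
  rcases ha_nonneg.eq_or_lt with h | h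
  · rw [← h]
    exact mul_nonneg (sqrt_nonneg _) hA.diag_nonneg
  · exact le_of_mul_le_mul_right quartic h

end Frobenius

section ColumnSampling

variable {m n t : ℕ} {q : Fin n → ℝ}

/-- The estimator `(AT)(AT)ᵀ` of `AAᵀ` built from the columns of `A` with indices `v`, where
`T = colSample t q v`. -/
noncomputable def sampledGram (q : Fin n → ℝ) (A : Matrix (Fin m) (Fin n) ℝ) (v : Fin t → Fin n) :
    Matrix (Fin m) (Fin m) ℝ :=
  (A * colSample t q v) * (A * colSample t q v)ᵀ

/-- The contribution `aⱼ aⱼᵀ / qⱼ` of one draw of the column `aⱼ` of `A` to `t • sampledGram`; as a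
function of a `q`-distributed index it is an unbiased estimator of `AAᵀ`. -/
noncomputable def colGram (q : Fin n → ℝ) (A : Matrix (Fin m) (Fin n) ℝ) (j : Fin n) :
    Matrix (Fin m) (Fin m) ℝ :=
  (q j)⁻¹ • vecMulVec (A.col j) (A.col j)

theorem isHermitian_sampledGram (A : Matrix (Fin m) (Fin n) ℝ) (v : Fin t → Fin n) :
    (sampledGram q A v).IsHermitian := by
  simpa only [sampledGram, conjTranspose_eq_transpose_of_trivial] using
    isHermitian_mul_conjTranspose_self (A * colSample t q v)

theorem sum_smul_colGram (hq : ∀ j, q j ≠ 0) (A : Matrix (Fin m) (Fin n) ℝ) :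
    ∑ j, q j • colGram q A j = A * Aᵀ := by
  simp only [colGram, smul_inv_smul₀ (hq _)]
  ext i i'
  simp [mul_apply, Matrix.sum_apply, vecMulVec_apply]

theorem sampledGram_eq_smul_sum_colGram (hq : ∀ j, 0 ≤ q j) (A : Matrix (Fin m) (Fin n) ℝ)
    (v : Fin t → Fin n) :
    sampledGram q A v = (t : ℝ)⁻¹ • ∑ l, colGram q A (v l) := by
  have scale (l : Fin t) : (√(t * q (v l)))⁻¹ * (√(t * q (v l)))⁻¹ = (t : ℝ)⁻¹ * (q (v l))⁻¹ := by
    rw [← mul_inv, mul_self_sqrt (mul_nonneg t.cast_nonneg (hq _)), mul_inv]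
  ext i i'
  simp only [sampledGram, colGram, colSample, mul_apply, transpose_apply, of_apply, mul_ite,
    mul_zero, Finset.sum_ite_eq', Finset.mem_univ, if_true, Matrix.smul_apply, Matrix.sum_apply,
    vecMulVec_apply, col_apply, smul_eq_mul, Finset.mul_sum]
  exact Finset.sum_congr rfl fun l _ ↦ by linear_combination A i (v l) * A i' (v l) * scale l

theorem norm_toLp_vec_colGram (hq : ∀ j, 0 ≤ q j) (A : Matrix (Fin m) (Fin n) ℝ) (j : Fin n) :
    ‖WithLp.toLp 2 (colGram q A j).vec‖ = (q j)⁻¹ * ∑ i, A i j ^ 2 := by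
  rw [colGram, vec_smul, WithLp.toLp_smul, norm_smul, norm_of_nonneg (inv_nonneg.2 (hq j)),
    norm_toLp_vec_vecMulVec_self]
  rfl

theorem frobeniusSq_sampledGram_sub (hq : ∀ j, 0 ≤ q j) (ht : 0 < t)
    (A : Matrix (Fin m) (Fin n) ℝ) (v : Fin t → Fin n) (P : Matrix (Fin m) (Fin m) ℝ) :
    frobeniusSq (sampledGram q A v - P) =
      ((t : ℝ)⁻¹ * ‖∑ l, (WithLp.toLp 2 (colGram q A (v l)).vec - WithLp.toLp 2 P.vec)‖) ^ 2 := by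
  have average : sampledGram q A v - P = (t : ℝ)⁻¹ • ∑ l, (colGram q A (v l) - P) := by
    rw [sampledGram_eq_smul_sum_colGram hq, Finset.sum_sub_distrib, Finset.sum_const,
      Finset.card_fin, smul_sub, ← Nat.cast_smul_eq_nsmul ℝ, inv_smul_smul₀ (by positivity)]
  rw [average, ← norm_toLp_vec_sq, vec_smul, vec_sum, WithLp.toLp_smul, norm_smul, norm_inv,
    norm_natCast, WithLp.toLp_sum]
  simp only [vec_sub, WithLp.toLp_sub]

theorem frobeniusSq_le_of_sum_col_sq_le {A : Matrix (Fin m) (Fin n) ℝ} {R : ℝ}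
    (hq_sum : ∑ j, q j = 1) (hR : ∀ j, ∑ i, A i j ^ 2 ≤ R * q j) : frobeniusSq A ≤ R :=
  calc frobeniusSq A = ∑ j, ∑ i, A i j ^ 2 := frobeniusSq_eq_sum_col A
    _ ≤ ∑ j, R * q j := Finset.sum_le_sum fun j _ ↦ hR j
    _ = R := by rw [← Finset.mul_sum, hq_sum, mul_one]

theorem one_sub_exp_le_iidProb_frobeniusSq_sampledGram_sub_le
    {A : Matrix (Fin m) (Fin n) ℝ} {R s : ℝ} (hq : ∀ j, 0 < q j) (hq_sum : ∑ j, q j = 1)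
    (hR : ∀ j, ∑ i, A i j ^ 2 ≤ R * q j) (hs : 0 < s) (hsA : s ≤ frobeniusSq A) (ht : 0 < t) :
    1 - 2 * exp (-(t * s ^ 2 / (4 * (R * frobeniusSq A)))) ≤
      iidProb t q {v | frobeniusSq (sampledGram q A v - A * Aᵀ) ≤ s ^ 2} := by
  have hq0 (j : Fin n) : 0 ≤ q j := (hq j).le
  have hF_pos : 0 < frobeniusSq A := hs.trans_le hsA
  have hR_pos : 0 < R := hF_pos.trans_le (frobeniusSq_le_of_sum_col_sq_le hq_sum hR)
  have mean : ∑ j, q j • WithLp.toLp 2 (colGram q A j).vec = WithLp.toLp 2 (A * Aᵀ).vec := by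
    simp only [← sum_smul_colGram (fun j ↦ (hq j).ne') A, vec_sum, vec_smul, WithLp.toLp_sum,
      WithLp.toLp_smul]
  have norm_le (j : Fin n) : ‖WithLp.toLp 2 (colGram q A j).vec‖ ≤ R := by
    rw [norm_toLp_vec_colGram hq0, inv_mul_le_iff₀ (hq j), mul_comm]
    exact hR j
  have mean_norm : ∑ j, q j * ‖WithLp.toLp 2 (colGram q A j).vec‖ = frobeniusSq A := by
    simp only [norm_toLp_vec_colGram hq0, mul_inv_cancel_left₀ (hq _).ne', frobeniusSq_eq_sum_col]
  have event (v : Fin t → Fin n) : frobeniusSq (sampledGram q A v - A * Aᵀ) ≤ s ^ 2 ↔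
      ‖∑ l, (WithLp.toLp 2 (colGram q A (v l)).vec - WithLp.toLp 2 (A * Aᵀ).vec)‖ ≤ t * s := by
    rw [frobeniusSq_sampledGram_sub hq0 ht, sq_le_sq₀ (by positivity) hs.le,
      inv_mul_le_iff₀ (by positivity)]
  simpa only [event] using bernstein_norm_sum_sub_mean hq0 hq_sum mean hR_pos norm_le
    hF_pos mean_norm.le hs hsA t

theorem sampledGram_eq_mul_transpose_of_subsingleton [Subsingleton (Fin n)]
    (hq_sum : ∑ j, q j = 1) (ht : 0 < t) (A : Matrix (Fin m) (Fin n) ℝ) (v : Fin t → Fin n) :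
    sampledGram q A v = A * Aᵀ := by
  have hq_one (j : Fin n) : q j = 1 := by rwa [Fintype.sum_subsingleton _ j] at hq_sum
  have colGram_eq (j : Fin n) : colGram q A j = A * Aᵀ := by
    rw [← sum_smul_colGram (fun i ↦ (hq_one i).trans_ne one_ne_zero), Fintype.sum_subsingleton _ j,
      hq_one, one_smul]
  rw [sampledGram_eq_smul_sum_colGram fun j ↦ (hq_one j).symm ▸ zero_le_one]
  simp only [colGram_eq, Finset.sum_const, Finset.card_fin]
  rw [← Nat.cast_smul_eq_nsmul ℝ, inv_smul_smul₀ (by positivity)]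

end ColumnSampling

section DiagonalSampling

variable {n t : ℕ} {A N : Matrix (Fin n) (Fin n) ℝ} {φ : ℝ}

/-- The sampling distribution on indices proportional to the diagonal of `M`; it is a probability
distribution when the diagonal is positive and nonempty. -/
noncomputable def diagProb (M : Matrix (Fin n) (Fin n) ℝ) (j : Fin n) : ℝ :=
  M j j / M.trace

theorem diagProb_pos {M : Matrix (Fin n) (Fin n) ℝ} (hM : ∀ j, 0 < M j j) (j : Fin n) :
    0 < diagProb M j :=
  div_pos (hM j) (Finset.sum_pos (fun i _ ↦ hM i) ⟨j, Finset.mem_univ j⟩)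

theorem sum_diagProb {M : Matrix (Fin n) (Fin n) ℝ} (hM : M.trace ≠ 0) : ∑ j, diagProb M j = 1 := by
  simp only [diagProb, ← Finset.sum_div]
  exact div_self hM

theorem trace_add_le_of_frobeniusSq_le (hN : frobeniusSq N ≤ frobeniusSq A) :
    (A + N).trace ≤ 2 * √n * √(frobeniusSq A) :=
  calc (A + N).trace = A.trace + N.trace := trace_add A N
    _ ≤ √n * √(frobeniusSq A) + √n * √(frobeniusSq N) :=
      add_le_add (trace_le_sqrt_mul_sqrt_frobeniusSq A) (trace_le_sqrt_mul_sqrt_frobeniusSq N)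
    _ ≤ √n * √(frobeniusSq A) + √n * √(frobeniusSq A) := by gcongr
    _ = 2 * √n * √(frobeniusSq A) := by ring

theorem sum_col_sq_le_mul_diagProb (hA : A.PosSemidef) (hN : frobeniusSq N ≤ frobeniusSq A)
    (hpos : ∀ j, 0 < (A + N) j j) (hφ : ∀ j, A j j ≤ φ * (A + N) j j) (j : Fin n) :
    ∑ i, A i j ^ 2 ≤ 2 * (φ * √n) * frobeniusSq A * diagProb (A + N) j := by
  have trace_pos : 0 < (A + N).trace := Finset.sum_pos (fun j _ ↦ hpos j) ⟨j, Finset.mem_univ j⟩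
  have hφ0 : 0 ≤ φ := nonneg_of_mul_nonneg_left (hA.diag_nonneg.trans (hφ j)) (hpos j)
  calc ∑ i, A i j ^ 2
      ≤ √(frobeniusSq A) * A j j := sum_col_sq_le_of_posSemidef hA j
    _ ≤ √(frobeniusSq A) * (φ * (A + N) j j) := by gcongr; exact hφ j
    _ = φ * √(frobeniusSq A) * (A + N).trace * diagProb (A + N) j := by
      rw [diagProb]
      field_simp
    _ ≤ φ * √(frobeniusSq A) * (2 * √n * √(frobeniusSq A)) * diagProb (A + N) j := by
      gcongr
      · exact (diagProb_pos hpos j).le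
      · exact trace_add_le_of_frobeniusSq_le hN
    _ = 2 * (φ * √n) * frobeniusSq A * diagProb (A + N) j := by
      linear_combination 2 * φ * √n * diagProb (A + N) j * mul_self_sqrt (frobeniusSq_nonneg A)

theorem two_mul_exp_neg_le_of_sample_size {a ε δ F : ℝ} (ha : 0 < a) (hε : 0 < ε) (hδ : 0 < δ)
    (hF : 0 < F) (hn : 2 ≤ n) (ht : 8 * a * log (n / δ) / ε ^ 2 ≤ t) :
    2 * exp (-(t * (ε * F) ^ 2 / (4 * (2 * a * F * F)))) ≤ δ := by
  have hn' : (2 : ℝ) ≤ n := mod_cast hn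
  have exponent : log (n / δ) ≤ t * (ε * F) ^ 2 / (4 * (2 * a * F * F)) :=
    calc log (n / δ) = 8 * a * log (n / δ) / ε ^ 2 * (ε * F) ^ 2 / (4 * (2 * a * F * F)) := by
          field_simp
          ring
      _ ≤ t * (ε * F) ^ 2 / (4 * (2 * a * F * F)) := by gcongr
  calc 2 * exp (-(t * (ε * F) ^ 2 / (4 * (2 * a * F * F))))
      ≤ 2 * exp (-log (n / δ)) := by gcongr
    _ = 2 / n * δ := by rw [exp_neg, exp_log (by positivity)]; field_simp
    _ ≤ 1 * δ := by gcongr; exact div_le_one_of_le₀ hn' (by positivity)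
    _ = δ := one_mul δ

theorem robust_spectral_bound_general {ε δ : ℝ} (hA : A.PosSemidef)
    (hN : frobeniusSq N ≤ frobeniusSq A) (hpos : ∀ j, 0 < (A + N) j j)
    (hφ : IsGreatest (Set.range fun j ↦ A j j / (A + N) j j) φ) (hε0 : 0 < ε) (hε1 : ε ≤ 1)
    (hδ0 : 0 < δ) (hδ1 : δ < 1) (ht : 8 * (φ * √n) * log (n / δ) / ε ^ 2 ≤ t) :
    1 - δ ≤ iidProb t (diagProb (A + N))
      {v | frobeniusSq (sampledGram (diagProb (A + N)) A v - A * Aᵀ) ≤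
        (ε * frobeniusSq A) ^ 2} := by
  obtain ⟨⟨j₀, -⟩, hφ_max⟩ := hφ
  have trace_pos : 0 < (A + N).trace := Finset.sum_pos (fun j _ ↦ hpos j) ⟨j₀, Finset.mem_univ j₀⟩
  have hq_sum : ∑ j, diagProb (A + N) j = 1 := sum_diagProb trace_pos.ne'
  have col_le := sum_col_sq_le_mul_diagProb hA hN hpos
    fun j ↦ (div_le_iff₀ (hpos j)).1 (hφ_max ⟨j, rfl⟩)
  have hF : 0 < frobeniusSq A := by
    refine (frobeniusSq_nonneg A).lt_of_ne' fun h ↦ ?_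
    simpa [h] using trace_pos.trans_le (trace_add_le_of_frobeniusSq_le hN)
  have hφn : 0 < φ * √n := by
    linarith [pos_of_mul_pos_left (hF.trans_le (frobeniusSq_le_of_sum_col_sq_le hq_sum col_le))
      hF.le]
  have ht_pos : 0 < t := by
    have log_pos : 0 < log (n / δ) :=
      log_pos ((one_lt_div hδ0).2 (hδ1.trans_le (mod_cast j₀.pos)))
    refine Nat.cast_pos.1 (lt_of_lt_of_le ?_ ht)
    positivity
  rcases eq_or_lt_of_le (Nat.one_le_iff_ne_zero.2 j₀.pos.ne') with rfl | hn
  · refine (sub_le_self 1 hδ0.le).trans (iidProb_eq_one hq_sum fun v ↦ ?_).ge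
    change frobeniusSq _ ≤ _
    rw [sampledGram_eq_mul_transpose_of_subsingleton hq_sum ht_pos, sub_self]
    simpa [frobeniusSq] using sq_nonneg _
  · refine le_trans ?_ (one_sub_exp_le_iidProb_frobeniusSq_sampledGram_sub_le (diagProb_pos hpos)
      hq_sum col_le (mul_pos hε0 hF) (mul_le_of_le_one_left hF.le hε1) ht_pos)
    exact sub_le_sub_left (two_mul_exp_neg_le_of_sample_size hφn hε0 hδ0 hF hn ht) 1

end DiagonalSampling

/-- Robust spectral bound: sampling t ≳ φ√n k² log(n/δ)/ε² columns of a corrupted PSD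
matrix proportionally to the diagonal of A+N yields (AT)(AT)ᵀ ≈ AAᵀ up to ±(ε/k)‖A‖_F²·I
in the Loewner order, with probability at least 1−δ. -/
theorem robust_spectral_bound :
    ∃ c₀ : ℝ, 0 < c₀ ∧
      ∀ (n : ℕ) (A N : Matrix (Fin n) (Fin n) ℝ) (η ε δ φ : ℝ) (k t : ℕ),
        A.PosSemidef →
        0 < η → η ≤ 1 →
        frobeniusSq N ≤ η * frobeniusSq A →
        (∀ j, (∑ i, (N i j)^2) ≤ ∑ i, (A i j)^2) →
        (∀ j, 0 < (A + N) j j) →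
        IsGreatest (Set.range fun j => A j j / (A + N) j j) φ →
        0 < ε → ε < 1 → 0 < δ → δ < 1 → 1 ≤ k →
        c₀ * φ * Real.sqrt n * (k : ℝ)^2 * Real.log ((n : ℝ) / δ) / ε^2 ≤ (t : ℝ) →
        1 - δ ≤
          iidProb t (fun j => (A + N) j j / (A + N).trace)
            {v : Fin t → Fin n |
              ((A * Aᵀ + ((ε / k) * frobeniusSq A) • (1 : Matrix (Fin n) (Fin n) ℝ)) -
                  (A * colSample t (fun j => (A + N) j j / (A + N).trace) v) *
                    (A * colSample t (fun j => (A + N) j j / (A + N).trace) v)ᵀ).PosSemidef ∧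
              (((A * colSample t (fun j => (A + N) j j / (A + N).trace) v) *
                    (A * colSample t (fun j => (A + N) j j / (A + N).trace) v)ᵀ) -
                  (A * Aᵀ - ((ε / k) * frobeniusSq A) •
                    (1 : Matrix (Fin n) (Fin n) ℝ))).PosSemidef} := by
  refine ⟨8, by norm_num, fun n A N η ε δ φ k t hA _ hη hN _ hpos hφ hε0 hε1 hδ0 hδ1 hk ht ↦ ?_⟩
  have hk' : (1 : ℝ) ≤ k := mod_cast hk
  have hF : 0 ≤ frobeniusSq A := frobeniusSq_nonneg A
  have frobenius_bound := robust_spectral_bound_general (t := t) (ε := ε / k) hA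
    (hN.trans (mul_le_of_le_one_left hF hη)) hpos hφ (by positivity)
    (div_le_one_of_le₀ (hε1.le.trans hk') (by positivity)) hδ0 hδ1
    (le_of_eq_of_le (by field_simp) ht)
  exact frobenius_bound.trans <| iidProb_mono (fun j ↦ (diagProb_pos hpos j).le) fun v hv ↦
    posSemidef_sub_of_frobeniusSq_sub_le (isHermitian_sampledGram A v)
      (isHermitian_mul_conjTranspose_self A) (by positivity) hv
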